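/- Let f : ℝ^d → ℝ be G-Lipschitz and Γ-invariant for an r-dimensional subspace Γ. Then for every k and every i ∈ [k], the k-fold smoothed function S_{δ,Γ}^k f is k-times differentiable and its i-th derivative is (r/δ)^i · G Lipschitz: ‖∇^i S_{δ,Γ}^k f(x) − ∇^i S_{δ,Γ}^k f(y)‖ ≤ (r/δ)^i G ‖x − y‖, where the norm is the induced operator norm. -/

import Mathlib

open MeasureTheory

/-- Subspace smoothing operator: average of `f` over `x + δ v` with `v` uniform in the
unit ball of the subspace `Γ`. -/
noncomputable def subSmooth {d : ℕ} (δ : ℝ) (Γ : Submodule ℝ (EuclideanSpace ℝ (Fin d)))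
    (f : EuclideanSpace ℝ (Fin d) → ℝ) : EuclideanSpace ℝ (Fin d) → ℝ :=
  fun x => ⨍ v in Metric.closedBall (0 : Γ) 1, f (x + δ • (v : EuclideanSpace ℝ (Fin d)))

section BallTranslation

open Metric Module

variable {E V : Type*} [NormedAddCommGroup E] [NormedSpace ℝ E] [FiniteDimensional ℝ E]
  [MeasurableSpace E] [BorelSpace E] (μ : Measure E) [μ.IsAddHaarMeasure]
  [NormedAddCommGroup V] [NormedSpace ℝ V]

theorem measureReal_closedBall_diff_closedBall_le (p q : E) :
    μ.real (closedBall p 1 \ closedBall q 1) ≤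
      finrank ℝ E * (‖p - q‖ / 2) * μ.real (closedBall (0 : E) 1) := by
  have hvol : ∀ x : E, μ.real (closedBall x 1) = μ.real (ball (0 : E) 1) := fun x => by
    simp [Measure.addHaar_real_closedBall]
  have hfin : ∀ (x : E) (ρ : ℝ), μ (closedBall x ρ) ≠ ⊤ := fun x ρ =>
    (isCompact_closedBall x ρ).measure_lt_top.ne
  rw [hvol 0]
  have hpos : 0 ≤ μ.real (ball (0 : E) 1) := measureReal_nonneg
  rcases le_or_gt (‖p - q‖ / 2) 1 with hs | hs
  · have hsub : closedBall (midpoint ℝ p q) (1 - ‖p - q‖ / 2) ⊆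
        closedBall p 1 ∩ closedBall q 1 := by
      refine Set.subset_inter (closedBall_subset_closedBall' ?_)
        (closedBall_subset_closedBall' ?_)
      · rw [dist_midpoint_left, dist_eq_norm]; norm_num; linarith
      · rw [dist_midpoint_right, dist_eq_norm]; norm_num; linarith
    have h1 := measureReal_mono (μ := μ) hsub
      (measure_ne_top_of_subset Set.inter_subset_left (hfin p 1))
    rw [Measure.addHaar_real_closedBall μ _ (by linarith)] at h1
    have h2 := one_add_mul_le_pow (a := -(‖p - q‖ / 2)) (by linarith) (finrank ℝ E)
    have h3 := measureReal_inter_add_sdiff (μ := μ) (s := closedBall p 1)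
      (t := closedBall q 1) measurableSet_closedBall (hfin p 1)
    rw [hvol p] at h3
    have h4 := mul_le_mul_of_nonneg_right h2 hpos
    rw [← sub_eq_add_neg 1] at h4
    linarith
  · have hnontriv : Nontrivial E := ⟨p, q, fun h => by simp [h] at hs; linarith⟩
    have hrank : (1 : ℝ) ≤ finrank ℝ E := by exact_mod_cast finrank_pos (R := ℝ) (M := E)
    calc μ.real (closedBall p 1 \ closedBall q 1) ≤ μ.real (closedBall p 1) :=
          measureReal_mono Set.sdiff_subset (hfin p 1)
      _ = 1 * μ.real (ball (0 : E) 1) := by rw [hvol, one_mul]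
      _ ≤ _ := by gcongr; nlinarith

theorem norm_setAverage_translate_sub_le {ψ : E → V} (hψ : Continuous ψ) {M : ℝ}
    (hM : ∀ v, ‖ψ v‖ ≤ M) (p : E) :
    ‖(⨍ v in closedBall (0 : E) 1, ψ (v + p) ∂μ) - ⨍ v in closedBall (0 : E) 1, ψ v ∂μ‖ ≤
      finrank ℝ E * M * ‖p‖ := by
  have hshift : ∫ v in closedBall (0 : E) 1, ψ (v + p) ∂μ = ∫ v in closedBall p 1, ψ v ∂μ := by
    rw [← (measurePreserving_add_right μ p).setIntegral_preimage_emb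
      (measurableEmbedding_addRight p) ψ (closedBall p 1)]
    congr 2
    ext v
    simp [dist_eq_norm]
  have hfin : ∀ x : E, μ (closedBall x 1) < ⊤ := fun x =>
    (isCompact_closedBall x 1).measure_lt_top
  have hint : ∀ x : E, IntegrableOn ψ (closedBall x 1) μ := fun x =>
    hψ.continuousOn.integrableOn_compact (isCompact_closedBall x 1)
  have hdiff : ∀ x y : E, ‖∫ v in closedBall x 1 \ closedBall y 1, ψ v ∂μ‖ ≤
      M * μ.real (closedBall x 1 \ closedBall y 1) := fun x y =>
    norm_setIntegral_le_of_norm_le_const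
      ((measure_mono Set.sdiff_subset).trans_lt (hfin x)) fun v _ => hM v
  have hM0 : 0 ≤ M := (norm_nonneg _).trans (hM 0)
  have hpos : 0 < μ.real (closedBall (0 : E) 1) :=
    ENNReal.toReal_pos (measure_closedBall_pos μ 0 one_pos).ne' (hfin 0).ne
  rw [setAverage_eq, setAverage_eq, hshift, ← smul_sub, norm_smul, norm_inv, Real.norm_eq_abs,
    abs_of_pos hpos, inv_mul_le_iff₀ hpos,
    ← integral_inter_add_sdiff (t := closedBall (0 : E) 1) measurableSet_closedBall (hint p),
    ← integral_inter_add_sdiff (t := closedBall p 1) measurableSet_closedBall (hint 0),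
    Set.inter_comm, add_sub_add_left_eq_sub]
  refine (norm_sub_le _ _).trans ?_
  have h1 := measureReal_closedBall_diff_closedBall_le μ p 0
  have h2 := measureReal_closedBall_diff_closedBall_le μ 0 p
  rw [sub_zero] at h1
  rw [zero_sub, norm_neg] at h2
  have h3 := mul_le_mul_of_nonneg_left (add_le_add h1 h2) hM0
  have h4 := add_le_add (hdiff p 0) (hdiff 0 p)
  linarith

end BallTranslation

section BallSmoothing

open Metric Module
open scoped NNReal

universe u

variable {E V : Type u} [NormedAddCommGroup E] [InnerProductSpace ℝ E]
  {Γ : Submodule ℝ E} {δ : ℝ} {F : E → V} {L : ℝ≥0}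

/-- `F` only depends on the orthogonal projection to `Γ`. -/
def OrthInvariant (Γ : Submodule ℝ E) (F : E → V) : Prop :=
  ∀ x, ∀ y ∈ Γᗮ, F (x + y) = F x

theorem OrthInvariant.eq_comp_projection [Γ.HasOrthogonalProjection]
    (hF : OrthInvariant Γ F) (hδ : 0 < δ) (x z : E) :
    F z = F (x + δ • ((δ⁻¹ • Γ.orthogonalProjectionOnto (z - x) : Γ) : E)) := by
  rw [Submodule.coe_smul, smul_inv_smul₀ hδ.ne',
    ← hF (x + _) _ (Γ.sub_starProjection_mem_orthogonal (z - x)),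
    Submodule.starProjection_apply]
  congr 1
  abel

variable [NormedAddCommGroup V]

theorem OrthInvariant.fderiv [NormedSpace ℝ V] (hF : OrthInvariant Γ F) :
    OrthInvariant Γ (fderiv ℝ F) := fun x y hy => by
  rw [← fderiv_comp_add_right]
  congr 1
  ext z
  exact hF z y hy

theorem lipschitzWith_add_smul_coe (x : E) :
    LipschitzWith ‖δ‖₊ fun v : Γ => x + δ • (v : E) :=
  LipschitzWith.of_dist_le_mul fun v w => by
    simp [dist_smul₀, Subtype.dist_eq]

theorem continuous_add_smul_coe (x : E) : Continuous fun v : Γ => x + δ • (v : E) := by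
  fun_prop

variable [FiniteDimensional ℝ E] [MeasurableSpace E] [BorelSpace E]

theorem measureReal_closedBall_zero_one_pos :
    0 < (volume : Measure Γ).real (closedBall 0 1) :=
  ENNReal.toReal_pos (measure_closedBall_pos _ 0 one_pos).ne'
    (isCompact_closedBall 0 1).measure_lt_top.ne

theorem integrableOn_comp_add_smul_coe (hF : Continuous F) (x : E) :
    IntegrableOn (fun v : Γ => F (x + δ • (v : E))) (closedBall 0 1) :=
  (hF.comp (continuous_add_smul_coe x)).continuousOn.integrableOn_compact
    (isCompact_closedBall 0 1)

variable [NormedSpace ℝ V]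

/-- The average of a vector-valued `F` over the ball of radius `δ` of the subspace `Γ`
translated to `x`. -/
noncomputable def ballSmooth (δ : ℝ) (Γ : Submodule ℝ E) (F : E → V) : E → V :=
  fun x => ⨍ v in closedBall (0 : Γ) 1, F (x + δ • (v : E))

theorem OrthInvariant.ballSmooth (hF : OrthInvariant Γ F) :
    OrthInvariant Γ (ballSmooth δ Γ F) := fun x y hy => by
  simp only [_root_.ballSmooth]
  congr 1
  ext v
  rw [add_right_comm, hF _ y hy]

theorem ballSmooth_sub {H : E → V} (hF : Continuous F) (hH : Continuous H) (x : E) :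
    ballSmooth δ Γ (fun z => F z - H z) x = ballSmooth δ Γ F x - ballSmooth δ Γ H x := by
  simp only [ballSmooth, setAverage_eq]
  rw [integral_sub (integrableOn_comp_add_smul_coe hF x) (integrableOn_comp_add_smul_coe hH x),
    smul_sub]

theorem norm_ballSmooth_le {M : ℝ} (hM : ∀ x, ‖F x‖ ≤ M) (x : E) :
    ‖ballSmooth δ Γ F x‖ ≤ M := by
  have hpos := measureReal_closedBall_zero_one_pos (Γ := Γ)
  rw [ballSmooth, setAverage_eq, norm_smul, norm_inv, Real.norm_eq_abs, abs_of_pos hpos,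
    inv_mul_le_iff₀ hpos, mul_comm]
  exact norm_setIntegral_le_of_norm_le_const (isCompact_closedBall 0 1).measure_lt_top
    fun v _ => hM _

theorem ballSmooth_comp_add_right (a x : E) :
    ballSmooth δ Γ (fun z => F (z + a)) x = ballSmooth δ Γ F (x + a) := by
  simp only [ballSmooth, add_right_comm]

theorem LipschitzWith.ballSmooth (hF : LipschitzWith L F) :
    LipschitzWith L (ballSmooth δ Γ F) := by
  rw [lipschitzWith_iff_norm_sub_le]
  intro x y
  have hcont : Continuous fun z => F (z + (y - x)) :=
    hF.continuous.comp (continuous_add_const (y - x))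
  have h := ballSmooth_sub (δ := δ) (Γ := Γ) hF.continuous hcont x
  rw [ballSmooth_comp_add_right, add_sub_cancel] at h
  rw [← h]
  refine norm_ballSmooth_le (fun z => ?_) x
  refine (lipschitzWith_iff_norm_sub_le.1 hF _ _).trans_eq ?_
  rw [sub_add_cancel_left, norm_neg, norm_sub_rev]

theorem lipschitzWith_ballSmooth_of_bounded (hδ : 0 < δ) (hF : Continuous F)
    (hinv : OrthInvariant Γ F) {M : ℝ≥0} (hM : ∀ x, ‖F x‖ ≤ M) :
    LipschitzWith (finrank ℝ Γ / δ.toNNReal * M) (ballSmooth δ Γ F) := by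
  rw [lipschitzWith_iff_norm_sub_le]
  intro x y
  have hx : ballSmooth δ Γ F x = ⨍ v in closedBall (0 : Γ) 1,
      F (y + δ • ((v + δ⁻¹ • Γ.orthogonalProjectionOnto (x - y) : Γ) : E)) := by
    rw [ballSmooth]
    congr 1
    ext v
    rw [hinv.eq_comp_projection hδ y, add_sub_right_comm, map_add, map_smul,
      Submodule.orthogonalProjectionOnto_mem_subspace_eq_self, smul_add, inv_smul_smul₀ hδ.ne',
      add_comm v]
  rw [hx]
  refine (norm_setAverage_translate_sub_le volume (hF.comp (continuous_add_smul_coe y))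
    (fun v => hM _) _).trans ?_
  rw [norm_smul, norm_inv, Real.norm_eq_abs, abs_of_pos hδ]
  have h1 : ‖Γ.orthogonalProjectionOnto (x - y)‖ ≤ ‖x - y‖ :=
    Submodule.norm_orthogonalProjectionOnto_apply_le Γ (x - y)
  calc (finrank ℝ Γ : ℝ) * M * (δ⁻¹ * ‖Γ.orthogonalProjectionOnto (x - y)‖)
      ≤ finrank ℝ Γ * M * (δ⁻¹ * ‖x - y‖) := by gcongr
    _ = _ := by
      simp only [NNReal.coe_mul, NNReal.coe_div, NNReal.coe_natCast, Real.coe_toNNReal δ hδ.le]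
      ring

theorem OrthInvariant.iterate_ballSmooth (hinv : OrthInvariant Γ F) (k : ℕ) :
    OrthInvariant Γ ((_root_.ballSmooth δ Γ)^[k] F) := by
  induction k with
  | zero => exact hinv
  | succ k ih =>
    rw [Function.iterate_succ_apply']
    exact ih.ballSmooth

theorem LipschitzWith.iterate_ballSmooth (hF : LipschitzWith L F) (k : ℕ) :
    LipschitzWith L ((_root_.ballSmooth δ Γ)^[k] F) := by
  induction k with
  | zero => exact hF
  | succ k ih =>
    rw [Function.iterate_succ_apply']
    exact ih.ballSmooth

variable [FiniteDimensional ℝ V]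

theorem ae_differentiableAt_add_smul_coe (hδ : 0 < δ) (hF : LipschitzWith L F)
    (hinv : OrthInvariant Γ F) (x : E) :
    ∀ᵐ v : Γ, DifferentiableAt ℝ F (x + δ • (v : E)) := by
  filter_upwards [(hF.comp (lipschitzWith_add_smul_coe (δ := δ) (Γ := Γ) x)).ae_differentiableAt
    (μ := (volume : Measure Γ))] with v hv
  rw [funext (hinv.eq_comp_projection hδ x)]
  refine DifferentiableAt.comp (g := F ∘ fun v : Γ => x + δ • (v : E))
    (f := fun z => δ⁻¹ • Γ.orthogonalProjectionOnto (z - x)) _ ?_ (by fun_prop)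
  convert hv
  rw [add_sub_cancel_left, map_smul, Submodule.orthogonalProjectionOnto_mem_subspace_eq_self,
    inv_smul_smul₀ hδ.ne']

theorem hasFDerivAt_ballSmooth (hδ : 0 < δ) (hF : LipschitzWith L F)
    (hinv : OrthInvariant Γ F) (x : E) :
    HasFDerivAt (ballSmooth δ Γ F) (ballSmooth δ Γ (fderiv ℝ F) x) x := by
  have hmeas : AEStronglyMeasurable (fun v : Γ => fderiv ℝ F (x + δ • (v : E)))
      (volume.restrict (closedBall 0 1)) := by
    borelize (E →L[ℝ] V)
    exact ((measurable_fderiv ℝ F).comp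
      (continuous_add_smul_coe x).measurable).aestronglyMeasurable
  have h := (hasFDerivAt_integral_of_dominated_loc_of_lip (𝕜 := ℝ)
    (μ := volume.restrict (closedBall (0 : Γ) 1))
    (F := fun z (v : Γ) => F (z + δ • (v : E))) (bound := fun _ => (L : ℝ))
    (F' := fun v => fderiv ℝ F (x + δ • (v : E))) (x₀ := x) Filter.univ_mem
    (.of_forall fun z => (integrableOn_comp_add_smul_coe hF.continuous z).aestronglyMeasurable)
    (integrableOn_comp_add_smul_coe hF.continuous x) hmeas
    (.of_forall fun v => ?_)
    (integrableOn_const (isCompact_closedBall _ _).measure_lt_top.ne)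
    (ae_restrict_of_ae ?_)).2
  · rw [show ballSmooth δ Γ F = fun z => _ from funext fun z => setAverage_eq _ _ _,
      ballSmooth, setAverage_eq]
    exact h.const_smul ((volume.real (closedBall (0 : Γ) 1))⁻¹)
  · rw [Real.nnabs_coe, ← mul_one L]
    exact (hF.comp (isometry_add_right (δ • (v : E))).lipschitz).lipschitzOnWith
  · filter_upwards [ae_differentiableAt_add_smul_coe hδ hF hinv x] with v hv
    exact (hasFDerivAt_comp_add_right _).2 hv.hasFDerivAt

theorem fderiv_ballSmooth (hδ : 0 < δ) (hF : LipschitzWith L F) (hinv : OrthInvariant Γ F) :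
    fderiv ℝ (ballSmooth δ Γ F) = ballSmooth δ Γ (fderiv ℝ F) :=
  funext fun x => (hasFDerivAt_ballSmooth hδ hF hinv x).fderiv

theorem lipschitzWith_fderiv_ballSmooth (hδ : 0 < δ) (hF : LipschitzWith L F)
    (hinv : OrthInvariant Γ F) :
    LipschitzWith (finrank ℝ Γ / δ.toNNReal * L) (fderiv ℝ (ballSmooth δ Γ F)) := by
  rw [lipschitzWith_iff_norm_sub_le]
  intro x y
  have hcont : ∀ a, Continuous fun z => F (z + a) := fun a =>
    hF.continuous.comp (continuous_add_const a)
  have hdiff : ∀ a, HasFDerivAt (ballSmooth δ Γ F) (fderiv ℝ (ballSmooth δ Γ F) a) a := fun a =>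
    (hasFDerivAt_ballSmooth hδ hF hinv a).differentiableAt.hasFDerivAt
  have hlip := lipschitzWith_ballSmooth_of_bounded (Γ := Γ) hδ ((hcont x).sub (hcont y))
    (fun z w hw => by simp only [Pi.sub_apply, add_right_comm z w, hinv _ w hw])
    (M := L * ‖x - y‖₊) (fun z => by
      simpa using lipschitzWith_iff_norm_sub_le.1 hF (z + x) (z + y))
  have heq : ballSmooth δ Γ ((fun z => F (z + x)) - fun z => F (z + y)) =
      fun z => ballSmooth δ Γ F (z + x) - ballSmooth δ Γ F (z + y) := by
    ext z
    rw [← ballSmooth_comp_add_right, ← ballSmooth_comp_add_right]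
    exact ballSmooth_sub (hcont x) (hcont y) z
  rw [heq] at hlip
  have hd : HasFDerivAt (fun z => ballSmooth δ Γ F (z + x) - ballSmooth δ Γ F (z + y))
      (fderiv ℝ (ballSmooth δ Γ F) x - fderiv ℝ (ballSmooth δ Γ F) y) 0 :=
    ((hasFDerivAt_comp_add_right x).2 (by simpa using hdiff x)).sub
      ((hasFDerivAt_comp_add_right y).2 (by simpa using hdiff y))
  have := norm_fderiv_le_of_lipschitz ℝ (x₀ := 0) hlip
  rw [hd.fderiv] at this
  simpa [mul_assoc] using this

theorem fderiv_iterate_ballSmooth (hδ : 0 < δ) (hF : LipschitzWith L F)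
    (hinv : OrthInvariant Γ F) (k : ℕ) :
    fderiv ℝ ((ballSmooth δ Γ)^[k] F) = (ballSmooth δ Γ)^[k] (fderiv ℝ F) := by
  induction k with
  | zero => rfl
  | succ k ih =>
    rw [Function.iterate_succ_apply', Function.iterate_succ_apply', ← ih]
    exact fderiv_ballSmooth hδ (hF.iterate_ballSmooth k) (hinv.iterate_ballSmooth k)

theorem contDiff_iterate_ballSmooth_and_lipschitzWith (hδ : 0 < δ) (k : ℕ) :
    ∀ {V : Type u} [NormedAddCommGroup V] [NormedSpace ℝ V] [FiniteDimensional ℝ V]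
      {F : E → V} {L : ℝ≥0}, LipschitzWith L F → OrthInvariant Γ F →
      ContDiff ℝ k ((ballSmooth δ Γ)^[k] F) ∧ ∀ i ≤ k,
        LipschitzWith ((finrank ℝ Γ / δ.toNNReal) ^ i * L)
          (iteratedFDeriv ℝ i ((ballSmooth δ Γ)^[k] F)) := by
  have hzero : ∀ {V : Type u} [NormedAddCommGroup V] [NormedSpace ℝ V] {F : E → V} {L : ℝ≥0},
      LipschitzWith L F → LipschitzWith L (iteratedFDeriv ℝ 0 F) := fun hF => by
    rw [iteratedFDeriv_zero_eq_comp]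
    simpa using (LinearIsometryEquiv.lipschitz _).comp hF
  induction k with
  | zero =>
    intro V _ _ _ F L hF _
    refine ⟨contDiff_zero.2 hF.continuous, fun i hi => ?_⟩
    obtain rfl : i = 0 := by omega
    simpa using hzero hF
  | succ k ih =>
    intro V _ _ _ F L hF hinv
    have hfderiv : fderiv ℝ ((ballSmooth δ Γ)^[k + 1] F) =
        (ballSmooth δ Γ)^[k] (fderiv ℝ (ballSmooth δ Γ F)) := by
      rw [Function.iterate_succ_apply]
      exact fderiv_iterate_ballSmooth hδ hF.ballSmooth hinv.ballSmooth k
    obtain ⟨hsmooth, hlip⟩ := ih (lipschitzWith_fderiv_ballSmooth hδ hF hinv)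
      hinv.ballSmooth.fderiv
    rw [← hfderiv] at hsmooth hlip
    constructor
    · rw [Nat.cast_succ, contDiff_succ_iff_fderiv]
      refine ⟨fun x => ?_, fun h => absurd h (by simp), hsmooth⟩
      rw [Function.iterate_succ_apply']
      exact (hasFDerivAt_ballSmooth hδ (hF.iterate_ballSmooth k) (hinv.iterate_ballSmooth k)
        x).differentiableAt
    · rintro (_ | i) hi
      · simpa using hzero (hF.iterate_ballSmooth (k + 1))
      · have h := (LinearIsometryEquiv.lipschitz
          (continuousMultilinearCurryRightEquiv' ℝ i E V).symm).comp (hlip i (by omega))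
        rw [one_mul, ← mul_assoc, ← pow_succ] at h
        have hsucc : iteratedFDeriv ℝ (i + 1) ((ballSmooth δ Γ)^[k + 1] F) =
            (continuousMultilinearCurryRightEquiv' ℝ i E V).symm ∘
              iteratedFDeriv ℝ i (fderiv ℝ ((ballSmooth δ Γ)^[k + 1] F)) :=
          funext fun x => iteratedFDeriv_succ_eq_comp_right
        rwa [hsucc]

end BallSmoothing

/-- The `k`-fold iterated subspace smoothing of a `G`-Lipschitz `Γ`-invariant function is
`k`-times differentiable, and for every `i ∈ [k]` its `i`-th derivative is
`(r/δ)^i G`-Lipschitz in operator norm. -/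
theorem stmt8 (d r k : ℕ) (Γ : Submodule ℝ (EuclideanSpace ℝ (Fin d)))
    (hΓ : Module.finrank ℝ Γ = r) (G δ : ℝ) (hδ : 0 < δ)
    (f : EuclideanSpace ℝ (Fin d) → ℝ)
    (hf : ∀ x y, |f x - f y| ≤ G * ‖x - y‖)
    (hinv : ∀ x : EuclideanSpace ℝ (Fin d), ∀ y ∈ Γᗮ, f (x + y) = f x) :
    ContDiff ℝ k ((subSmooth δ Γ)^[k] f) ∧
      ∀ i, 1 ≤ i → i ≤ k → ∀ x y,
        ‖iteratedFDeriv ℝ i ((subSmooth δ Γ)^[k] f) x -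
          iteratedFDeriv ℝ i ((subSmooth δ Γ)^[k] f) y‖ ≤
        ((r : ℝ) / δ) ^ i * G * ‖x - y‖ := by
  have hlip : LipschitzWith G.toNNReal f := LipschitzWith.of_dist_le_mul fun x y => by
    rw [Real.dist_eq, dist_eq_norm]
    exact (hf x y).trans (by gcongr; exact Real.le_coe_toNNReal G)
  rw [show subSmooth δ Γ = ballSmooth δ Γ from rfl]
  obtain ⟨hsmooth, hder⟩ := contDiff_iterate_ballSmooth_and_lipschitzWith hδ k hlip hinv
  refine ⟨hsmooth, fun i _ hi x y => ?_⟩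
  rcases le_or_gt 0 G with hG | hG
  · have h := lipschitzWith_iff_norm_sub_le.1 (hder i hi) x y
    simpa only [NNReal.coe_mul, NNReal.coe_pow, NNReal.coe_div, NNReal.coe_natCast,
      Real.coe_toNNReal δ hδ.le, Real.coe_toNNReal G hG, hΓ] using h
  · have hxy : x = y := by
      have h := (abs_nonneg _).trans (hf x y)
      rw [← sub_eq_zero, ← norm_le_zero_iff]
      nlinarith
    simp [hxy]
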